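/- arXiv:math/0503050 — 2 statements merged into one kernel-verified Lean document; each statement's English description precedes it below -/
import Mathlib

section
/- Let F be a finite field with q elements, let d ≥ 2 and 0 < k < d be integers, and let v_1, …, v_n be vectors spanning F^r, representing a matroid M on {1,…,n} with rank function r(A) = dim_F span{v_i : i ∈ A} (so r(M) = r). Then the cardinality of the space of (k,d)-photos of M satisfies |X_{k,d}(M)| = ( [d−1 choose k−1]_q )^{n−r} · ( q^k · [d−1 choose k]_q )^{r} · T_M( [d]_q / [d−k]_q , [d]_q / [k]_q ), as an identity of rational numbers. -/
/-- The space of `(k,d)`-photos of the matroid represented by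
`v : Fin n → F^r`: pairs `(φ, W)` where `φ : F^r → F^d` is linear, each `W i`
is a `k`-dimensional subspace of `F^d`, and `φ (v i) ∈ W i` for all `i`. -/
def PhotoSpace (F : Type*) [Field F] (r d k n : ℕ) (v : Fin n → (Fin r → F)) :=
  {p : ((Fin r → F) →ₗ[F] (Fin d → F)) × (Fin n → Submodule F (Fin d → F)) //
    (∀ i, Module.finrank F (p.2 i) = k) ∧ ∀ i, p.1 (v i) ∈ p.2 i}

/-- The Gaussian binomial coefficient `[j choose k]_q` as a rational number. -/
def gaussBinom (q : ℚ) (j k : ℕ) : ℚ :=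
  ∏ i ∈ Finset.range k, (q ^ (j - i) - 1) / (q ^ (k - i) - 1)

/-- The `q`-integer `[j]_q = (q^j - 1)/(q - 1)`. -/
def qInt (q : ℚ) (j : ℕ) : ℚ := (q ^ j - 1) / (q - 1)

/-- The rank function of the matroid represented by `v`. -/
noncomputable def repRank (F : Type*) [Field F] {r n : ℕ}
    (v : Fin n → (Fin r → F)) (A : Set (Fin n)) : ℕ :=
  Module.finrank F (Submodule.span F (v '' A))

/-- The corank-nullity (Tutte polynomial) evaluation
`T_M(x,y) = Σ_{A ⊆ E} (x-1)^{r(E)-r(A)} (y-1)^{|A|-r(A)}`. -/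
noncomputable def tutteEval (F : Type*) [Field F] {r n : ℕ}
    (v : Fin n → (Fin r → F)) (x y : ℚ) : ℚ :=
  ∑ A : Finset (Fin n),
    (x - 1) ^ (repRank F v Set.univ - repRank F v (A : Set (Fin n))) *
      (y - 1) ^ (A.card - repRank F v (A : Set (Fin n)))

/-!
Fix `φ`.  The subspaces `W i` are then chosen independently, with `[d-1 choose k-1]_q` choices if
`φ (v i) ≠ 0` and `Y = [d]_q / [k]_q` times as many if `φ (v i) = 0`.  Expanding the product
`∏ i, (1 + (Y - 1) [φ (v i) = 0])` over subsets `A` and summing over `φ` leaves the number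
`q ^ (d (r - r(A)))` of maps that vanish on `A`.  Since `q ^ d = (X - 1) (Y - 1)` for
`X = [d]_q / [d-k]_q`, this is the corank-nullity expansion of the Tutte polynomial at `(X, Y)`.
-/

open Module

section QAnalogues

variable (q : ℚ)

theorem qInt_add (m n : ℕ) : qInt q (m + n) = qInt q m + q ^ m * qInt q n := by
  simp only [qInt]
  ring

theorem qInt_pos {q : ℚ} (hq : 1 < q) {n : ℕ} (hn : n ≠ 0) : 0 < qInt q n :=
  div_pos (sub_pos.2 (one_lt_pow₀ hq hn)) (sub_pos.2 hq)

-- For `q = 1` both sides are `0`, because `x / 0 = 0`.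
theorem qInt_div_qInt (m n : ℕ) : qInt q m / qInt q n = (q ^ m - 1) / (q ^ n - 1) := by
  rcases eq_or_ne q 1 with rfl | hq
  · simp [qInt]
  · exact div_div_div_cancel_right₀ (sub_ne_zero.2 hq) _ _

theorem qInt_add_div_qInt_sub_one {q : ℚ} {m : ℕ} (hm : qInt q m ≠ 0) (n : ℕ) :
    qInt q (m + n) / qInt q m - 1 = q ^ m * (qInt q n / qInt q m) := by
  rw [qInt_add, add_div, div_self hm, add_sub_cancel_left, mul_div_assoc]

theorem qInt_div_sub_one_mul_qInt_div_sub_one {q : ℚ} {m n : ℕ} (hm : qInt q m ≠ 0)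
    (hn : qInt q n ≠ 0) :
    (qInt q (m + n) / qInt q n - 1) * (qInt q (m + n) / qInt q m - 1) = q ^ (m + n) := by
  rw [qInt_add_div_qInt_sub_one hm, add_comm m n, qInt_add_div_qInt_sub_one hn, pow_add]
  field_simp

-- For `j = 0` the subtraction truncates, but then both sides are `0`.
theorem gaussBinom_succ (j k : ℕ) :
    gaussBinom q j (k + 1) = gaussBinom q (j - 1) k * (qInt q j / qInt q (k + 1)) := by
  simp only [gaussBinom, Finset.prod_range_succ', qInt_div_qInt, Nat.add_sub_add_right,
    Nat.sub_zero, Nat.sub_sub, add_comm 1]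

theorem gaussBinom_succ_eq_mul_sub (j k : ℕ) :
    gaussBinom q j (k + 1) = gaussBinom q j k * (qInt q (j - k) / qInt q (k + 1)) := by
  simp only [gaussBinom, Finset.prod_div_distrib, qInt_div_qInt]
  rw [Finset.prod_range_succ, Finset.prod_range_succ' (fun i ↦ q ^ (k + 1 - i) - 1)]
  simp only [Nat.add_sub_add_right, Nat.sub_zero, mul_div_mul_comm]

theorem gaussBinom_mul_qInt_div_sub_one {q : ℚ} {j k : ℕ} (hk : qInt q (k + 1) ≠ 0) (hkj : k ≤ j) :
    gaussBinom q j k * (qInt q (j + 1) / qInt q (k + 1) - 1) =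
      q ^ (k + 1) * gaussBinom q j (k + 1) := by
  have split : j + 1 = k + 1 + (j - k) := by omega
  rw [split, qInt_add_div_qInt_sub_one hk, gaussBinom_succ_eq_mul_sub]
  ring

end QAnalogues

section CountingSubspaces

variable {F V : Type*} [Field F] [AddCommGroup V] [Module F V] [FiniteDimensional F V]

theorem finrank_comap_mkQ (P : Submodule F V) (U : Submodule F (V ⧸ P)) :
    finrank F (U.comap P.mkQ) = finrank F U + finrank F P := by
  have h := (P.mkQ.domRestrict (U.comap P.mkQ)).finrank_range_add_finrank_ker
  rw [LinearMap.range_domRestrict, Submodule.map_comap_eq_of_surjective P.mkQ_surjective,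
    LinearMap.ker_domRestrict, Submodule.ker_mkQ] at h
  rw [← h, (Submodule.comapSubtypeEquivOfLe (P.le_comap_mkQ U)).finrank_eq]

theorem natCard_submodule_finrank_eq_and_le (P : Submodule F V) (k : ℕ) :
    Nat.card {W : Submodule F V // finrank F W = k + finrank F P ∧ P ≤ W} =
      Nat.card {U : Submodule F (V ⧸ P) // finrank F U = k} := by
  have e : {U : Submodule F (V ⧸ P) // finrank F U = k} ≃
      {W : Set.Ici P // finrank F W.1 = k + finrank F P} :=
    (Submodule.comapMkQRelIso P).toEquiv.subtypeEquiv fun U ↦ by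
      change _ ↔ finrank F (U.comap P.mkQ) = _
      rw [finrank_comap_mkQ, Nat.add_right_cancel_iff]
  simp only [Nat.card_congr (e.trans (Equiv.subtypeSubtypeEquivSubtypeInter (P ≤ ·)
    (finrank F · = k + finrank F P))), and_comm]

theorem natCard_submodule_finrank_eq_succ_and_mem {w : V} (hw : w ≠ 0) (k : ℕ) :
    Nat.card {W : Submodule F V // finrank F W = k + 1 ∧ w ∈ W} =
      Nat.card {U : Submodule F (V ⧸ F ∙ w) // finrank F U = k} := by
  simp only [← natCard_submodule_finrank_eq_and_le, finrank_span_singleton hw,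
    Submodule.span_singleton_le_iff_mem]

theorem finrank_quotient_span_singleton {w : V} (hw : w ≠ 0) :
    finrank F (V ⧸ F ∙ w) = finrank F V - 1 := by
  rw [Submodule.finrank_quotient, finrank_span_singleton hw]

variable [Fintype F]

theorem natCard_ne_zero_eq_pow_finrank_sub_one :
    Nat.card {w : V // w ≠ 0} = Fintype.card F ^ finrank F V - 1 := by
  classical
  have : Finite V := Module.finite_of_finite F
  have := Fintype.ofFinite V
  rw [Nat.card_eq_fintype_card, Fintype.card_subtype_compl, Fintype.card_subtype_eq,
    Module.card_eq_pow_finrank (K := F)]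

-- Both sides count the pairs `(w, W)` with `0 ≠ w ∈ W`.
theorem sum_natCard_submodule_mem [Fintype {w : V // w ≠ 0}] (k : ℕ) :
    ∑ w : {w : V // w ≠ 0}, Nat.card {W : Submodule F V // finrank F W = k ∧ w.1 ∈ W} =
      Nat.card {W : Submodule F V // finrank F W = k} * (Fintype.card F ^ k - 1) := by
  have : Finite V := Module.finite_of_finite F
  have := Fintype.ofFinite {W : Submodule F V // finrank F W = k}
  have e : (Σ w : {w : V // w ≠ 0}, {W : Submodule F V // finrank F W = k ∧ w.1 ∈ W}) ≃
      Σ W : {W : Submodule F V // finrank F W = k}, {w : W.1 // w ≠ 0} :=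
    { toFun := fun p ↦ ⟨⟨p.2, p.2.2.1⟩, ⟨p.1, p.2.2.2⟩, fun h ↦ p.1.2 (congrArg Subtype.val h)⟩
      invFun := fun p ↦ ⟨⟨p.2.1, fun h ↦ p.2.2 (Subtype.ext h)⟩, p.1, p.1.2, p.2.1.2⟩
      left_inv := fun _ ↦ rfl
      right_inv := fun _ ↦ rfl }
  have card_ne_zero (W : {W : Submodule F V // finrank F W = k}) :
      Nat.card {w : W.1 // w ≠ 0} = Fintype.card F ^ k - 1 := by
    rw [natCard_ne_zero_eq_pow_finrank_sub_one (F := F), W.2]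
  rw [← Nat.card_sigma, Nat.card_congr e, Nat.card_sigma]
  simp only [card_ne_zero, Finset.sum_const, Finset.card_univ, smul_eq_mul,
    Nat.card_eq_fintype_card]

variable (F V) in
theorem natCard_submodule_finrank_eq (k : ℕ) :
    (Nat.card {W : Submodule F V // finrank F W = k} : ℚ) =
      gaussBinom (Fintype.card F) (finrank F V) k := by
  induction k generalizing V with
  | zero => simp [gaussBinom, Submodule.finrank_eq_zero]
  | succ k ih =>
    classical
    have : Finite V := Module.finite_of_finite F
    have := Fintype.ofFinite {w : V // w ≠ 0}
    have hq : (1 : ℚ) < Fintype.card F := by exact_mod_cast Fintype.one_lt_card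
    have card_mem (w : {w : V // w ≠ 0}) :
        (Nat.card {W : Submodule F V // finrank F W = k + 1 ∧ w.1 ∈ W} : ℚ) =
          gaussBinom (Fintype.card F) (finrank F V - 1) k := by
      rw [natCard_submodule_finrank_eq_succ_and_mem w.2, ih, finrank_quotient_span_singleton w.2]
    have double_count : ((Fintype.card F : ℚ) ^ finrank F V - 1) *
        gaussBinom (Fintype.card F) (finrank F V - 1) k =
          Nat.card {W : Submodule F V // finrank F W = k + 1} *
            ((Fintype.card F : ℚ) ^ (k + 1) - 1) := by
      have h := congrArg (Nat.cast (R := ℚ))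
        (sum_natCard_submodule_mem (F := F) (V := V) (k + 1))
      simpa only [Nat.cast_sum, card_mem, Finset.sum_const, Finset.card_univ, nsmul_eq_mul,
        ← Nat.card_eq_fintype_card (α := {w : V // w ≠ 0}),
        natCard_ne_zero_eq_pow_finrank_sub_one (F := F), Nat.cast_mul,
        Nat.cast_pred (pow_pos Fintype.card_pos _), Nat.cast_pow] using h
    rw [gaussBinom_succ, qInt_div_qInt, mul_div_assoc', mul_comm (gaussBinom ..), double_count,
      mul_div_cancel_right₀ _ (sub_pos.2 (one_lt_pow₀ hq k.succ_ne_zero)).ne']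

theorem natCard_submodule_finrank_eq_succ_and_mem_eq_ite [DecidableEq V] (w : V) (k : ℕ) :
    (Nat.card {W : Submodule F V // finrank F W = k + 1 ∧ w ∈ W} : ℚ) =
      gaussBinom (Fintype.card F) (finrank F V - 1) k *
        (if w = 0 then qInt (Fintype.card F) (finrank F V) / qInt (Fintype.card F) (k + 1)
          else 1) := by
  split_ifs with hw
  · simp only [hw, zero_mem, and_true]
    rw [natCard_submodule_finrank_eq, gaussBinom_succ]
  · rw [natCard_submodule_finrank_eq_succ_and_mem hw, natCard_submodule_finrank_eq,
      finrank_quotient_span_singleton hw, mul_one]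

end CountingSubspaces

theorem natCard_linearMap_le_ker {F V W : Type*} [Field F] [Fintype F] [AddCommGroup V]
    [Module F V] [FiniteDimensional F V] [AddCommGroup W] [Module F W] [FiniteDimensional F W]
    (S : Submodule F V) :
    Nat.card {φ : V →ₗ[F] W // S ≤ φ.ker} =
      (Fintype.card F ^ finrank F W) ^ (finrank F V - finrank F S) := by
  have e : {φ : V →ₗ[F] W // S ≤ φ.ker} ≃ ((V ⧸ S) →ₗ[F] W) :=
    { toFun := fun φ ↦ S.liftQ φ.1 φ.2
      invFun := fun ψ ↦ ⟨ψ ∘ₗ S.mkQ, S.ker_mkQ.ge.trans (LinearMap.ker_le_ker_comp _ _)⟩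
      left_inv := fun φ ↦ Subtype.ext (S.liftQ_mkQ φ.1 φ.2)
      right_inv := fun ψ ↦ Submodule.linearMap_qext S (S.liftQ_mkQ _ _) }
  rw [Nat.card_congr e, natCard_eq_pow_finrank (K := F), finrank_linearMap,
    Submodule.finrank_quotient, Nat.card_eq_fintype_card, mul_comm, pow_mul]

theorem pow_mul_mul_pow_sub {R : Type*} [CommSemiring R] (x y : R) {s a ρ n : ℕ} (hsa : s ≤ a)
    (hsρ : s ≤ ρ) (hρn : ρ ≤ n) :
    y ^ a * (x * y) ^ (n - s) =
      (x * y) ^ (n - ρ) * y ^ ρ * (x ^ (ρ - s) * y ^ (a - s)) := by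
  have split_n : n - s = n - ρ + (ρ - s) := by omega
  have split_a : a + (ρ - s) = ρ + (a - s) := by omega
  calc y ^ a * (x * y) ^ (n - s) = (x * y) ^ (n - ρ) * x ^ (ρ - s) * y ^ (a + (ρ - s)) := by
        rw [split_n]
        ring
    _ = (x * y) ^ (n - ρ) * y ^ ρ * (x ^ (ρ - s) * y ^ (a - s)) := by
        rw [split_a]
        ring

section TutteSum

variable {F V W ι R : Type*} [Field F] [AddCommGroup V] [Module F V] [AddCommGroup W] [Module F W]
  [CommRing R]

variable (F) in
/-- The corank-nullity expansion of the Tutte polynomial at `(x, y)` of the matroid represented by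
the family `v`, in which a set `A` has rank `(v '' A).finrank F`. This is `tutteEval` for families
that are indexed by any finite type and lie in any vector space. -/
noncomputable def tutteSum [Fintype ι] (v : ι → V) (x y : R) : R :=
  ∑ A : Finset ι, (x - 1) ^ ((Set.range v).finrank F - (v '' A).finrank F) *
    (y - 1) ^ (A.card - (v '' A).finrank F)

theorem tutteEval_eq_tutteSum {r n : ℕ} (v : Fin n → Fin r → F) (x y : ℚ) :
    tutteEval F v x y = tutteSum F v x y := by
  have repRank_eq (A : Set (Fin n)) : repRank F v A = (v '' A).finrank F := rfl
  simp only [tutteEval, tutteSum, repRank_eq, Set.image_univ]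

theorem finrank_image_le_card (v : ι → V) (A : Finset ι) : (v '' A).finrank F ≤ A.card := by
  rw [Set.image_eq_range, ← Fintype.card_coe A]
  exact finrank_range_le_card (R := F) fun i : A ↦ v i

variable [Fintype F] [FiniteDimensional F V] [FiniteDimensional F W] [Fintype (V →ₗ[F] W)]

theorem sum_linearMap_prod_ite_eq_zero [DecidableEq W] (v : ι → V) (A : Finset ι) :
    ∑ φ : V →ₗ[F] W, ∏ i ∈ A, (if φ (v i) = 0 then (1 : R) else 0) =
      ((Fintype.card F : R) ^ finrank F W) ^ (finrank F V - (v '' A).finrank F) := by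
  classical
  have vanish_iff (φ : V →ₗ[F] W) :
      (∀ i ∈ A, φ (v i) = 0) ↔ Submodule.span F (v '' A) ≤ φ.ker := by
    simp [Submodule.span_le, Set.subset_def]
  simp only [Finset.prod_ite_zero, Finset.prod_const_one, vanish_iff]
  rw [Finset.sum_boole, ← Fintype.card_subtype, ← Nat.card_eq_fintype_card,
    natCard_linearMap_le_ker, Set.finrank]
  push_cast
  rfl

theorem sum_linearMap_prod_ite_eq_tutteSum [Fintype ι] [DecidableEq W] (v : ι → V) {x y : R}
    (hxy : (x - 1) * (y - 1) = (Fintype.card F : R) ^ finrank F W) :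
    ∑ φ : V →ₗ[F] W, ∏ i, (if φ (v i) = 0 then y else 1) =
      ((Fintype.card F : R) ^ finrank F W) ^ (finrank F V - (Set.range v).finrank F) *
        (y - 1) ^ (Set.range v).finrank F * tutteSum F v x y := by
  have ite_eq (φ : V →ₗ[F] W) (i : ι) : (if φ (v i) = 0 then y else 1) =
      (y - 1) * (if φ (v i) = 0 then 1 else 0) + 1 := by
    split_ifs <;> ring
  simp only [ite_eq, Finset.prod_add_one, Finset.powerset_univ, Finset.prod_mul_distrib,
    Finset.prod_const]
  rw [Finset.sum_comm, tutteSum, Finset.mul_sum]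
  refine Finset.sum_congr rfl fun A _ ↦ ?_
  rw [← Finset.mul_sum, sum_linearMap_prod_ite_eq_zero, ← hxy]
  exact pow_mul_mul_pow_sub (x - 1) (y - 1) (finrank_image_le_card v A)
    (Set.finrank_mono (Set.image_subset_range v A)) (Submodule.finrank_le _)

end TutteSum

section Photos

variable (F : Type*) {V ι : Type*} (W : Type*) [Field F] [AddCommGroup V] [Module F V]
  [AddCommGroup W] [Module F W]

/-- The `k`-dimensional photos in `W` of a family `v` of vectors of `V`. This is `PhotoSpace`
without a choice of coordinates. -/
def Photos (k : ℕ) (v : ι → V) :=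
  {p : (V →ₗ[F] W) × (ι → Submodule F W) //
    (∀ i, finrank F (p.2 i) = k) ∧ ∀ i, p.1 (v i) ∈ p.2 i}

variable {F} in
theorem photoSpace_eq_photos {r d n : ℕ} (k : ℕ) (v : Fin n → Fin r → F) :
    PhotoSpace F r d k n v = Photos F (Fin d → F) k v :=
  rfl

variable [Fintype ι]

theorem natCard_photos [Finite W] [Fintype (V →ₗ[F] W)] (k : ℕ) (v : ι → V) :
    Nat.card (Photos F W k v) = ∑ φ : V →ₗ[F] W, ∏ i,
      Nat.card {U : Submodule F W // finrank F U = k ∧ φ (v i) ∈ U} := by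
  have e : Photos F W k v ≃
      Σ φ : V →ₗ[F] W, ∀ i, {U : Submodule F W // finrank F U = k ∧ φ (v i) ∈ U} :=
    { toFun := fun p ↦ ⟨p.1.1, fun i ↦ ⟨p.1.2 i, p.2.1 i, p.2.2 i⟩⟩
      invFun := fun x ↦ ⟨(x.1, fun i ↦ (x.2 i).1), fun i ↦ (x.2 i).2.1, fun i ↦ (x.2 i).2.2⟩
      left_inv := fun _ ↦ rfl
      right_inv := fun _ ↦ rfl }
  rw [Nat.card_congr e, Nat.card_sigma]
  simp only [Nat.card_pi]

theorem photo_count_general [Fintype F] [FiniteDimensional F V] {k : ℕ} (hk : 0 < k)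
    (hkd : k < finrank F W) (v : ι → V) :
    (Nat.card (Photos F W k v) : ℚ) =
      gaussBinom (Fintype.card F) (finrank F W - 1) (k - 1) ^
          (Fintype.card ι - (Set.range v).finrank F) *
        ((Fintype.card F : ℚ) ^ k * gaussBinom (Fintype.card F) (finrank F W - 1) k) ^
          (Set.range v).finrank F *
        ((Fintype.card F : ℚ) ^ finrank F W) ^ (finrank F V - (Set.range v).finrank F) *
        tutteSum F v
          (qInt (Fintype.card F) (finrank F W) / qInt (Fintype.card F) (finrank F W - k))
          (qInt (Fintype.card F) (finrank F W) / qInt (Fintype.card F) k) := by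
  classical
  have : FiniteDimensional F W := .of_finrank_pos (by omega)
  have : Finite W := Module.finite_of_finite F
  have : Finite (V →ₗ[F] W) := Module.finite_of_finite F
  have := Fintype.ofFinite (V →ₗ[F] W)
  have hq : (1 : ℚ) < Fintype.card F := by exact_mod_cast Fintype.one_lt_card
  have qInt_ne_zero {m : ℕ} (hm : m ≠ 0) : qInt (Fintype.card F) m ≠ 0 := (qInt_pos hq hm).ne'
  obtain ⟨k, rfl⟩ := Nat.exists_eq_add_one.2 hk
  have hyperbola := qInt_div_sub_one_mul_qInt_div_sub_one (qInt_ne_zero hk.ne')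
    (qInt_ne_zero (Nat.sub_pos_of_lt hkd).ne')
  rw [Nat.add_sub_cancel' hkd.le] at hyperbola
  have scale := gaussBinom_mul_qInt_div_sub_one (j := finrank F W - 1) (qInt_ne_zero hk.ne')
    (by omega)
  rw [Nat.sub_add_cancel (by omega)] at scale
  have rank_le_card : (Set.range v).finrank F ≤ Fintype.card ι := finrank_range_le_card v
  rw [natCard_photos]
  push_cast
  simp only [natCard_submodule_finrank_eq_succ_and_mem_eq_ite, Finset.prod_mul_distrib,
    Finset.prod_const, Finset.card_univ]
  rw [← Finset.mul_sum, sum_linearMap_prod_ite_eq_tutteSum v hyperbola, ← scale, mul_pow,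
    ← pow_sub_mul_pow _ rank_le_card]
  ring

end Photos

/-- **Theorem (counting photos over a finite field).**
Let `F` be a finite field with `q` elements, `d ≥ 2`, `0 < k < d`, and let
`v 0, …, v (n-1)` span `F^r`.  Then the number of `(k,d)`-photos of the matroid
`M` represented by `v` equals
`[d-1 choose k-1]_q^{n-r} · (q^k [d-1 choose k]_q)^r · T_M([d]_q/[d-k]_q, [d]_q/[k]_q)`. -/
theorem photo_count (F : Type*) [Field F] [Fintype F] (r d k n : ℕ)
    (hd : 2 ≤ d) (hk : 0 < k) (hkd : k < d)
    (v : Fin n → (Fin r → F)) (hspan : Submodule.span F (Set.range v) = ⊤) :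
    (Nat.card (PhotoSpace F r d k n v) : ℚ) =
      (gaussBinom (Fintype.card F : ℚ) (d - 1) (k - 1)) ^ (n - r) *
        ((Fintype.card F : ℚ) ^ k * gaussBinom (Fintype.card F : ℚ) (d - 1) k) ^ r *
        tutteEval F v (qInt (Fintype.card F : ℚ) d / qInt (Fintype.card F : ℚ) (d - k))
          (qInt (Fintype.card F : ℚ) d / qInt (Fintype.card F : ℚ) k) := by
  have rank_eq : (Set.range v).finrank F = r := by
    rw [Set.finrank, hspan, finrank_top, finrank_fin_fun]
  simpa [rank_eq, tutteEval_eq_tutteSum, photoSpace_eq_photos] using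
    photo_count_general F (Fin d → F) hk (by simpa using hkd) v
end

section
/- Let F be a field with more than two elements and let μ ∈ F with μ ≠ 0 and μ ≠ 1. Let e_1, e_2 be the standard basis of F², and set v_1 = e_1, v_2 = e_1 + e_2, v_3 = e_2, v_4 = e_1 + μ·e_2 (a representation of the uniform matroid U_{2,4}). Let d ≥ 2 be an integer, let K = F(Φ) be the field of rational functions over F in the d·2 entries of a generic d × 2 matrix Φ : K² → K^d, and put w_i = v_i ⊗ Φ(v_i) ∈ K² ⊗_K K^d for i = 1,…,4. Then (μ − 1)·w_1 − μ·w_2 + (μ − μ²)·w_3 + w_4 = 0, and every 3-element subset of {w_1, w_2, w_3, w_4} is K-linearly independent. Consequently the d-rigidity matroid R^d(U_{2,4}) is the uniform matroid U_{3,4} for every integer d ≥ 2. -/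
open scoped TensorProduct

/-- The field `K = F(Φ)` of rational functions over `F` in the `d·r` entries
`Φ_{st}` of a generic `d × r` matrix. -/
abbrev GenericField (F : Type*) [Field F] (d r : ℕ) : Type _ :=
  FractionRing (MvPolynomial (Fin d × Fin r) F)

/-- The rigidity vector `w ⊗ Φ(w) ∈ K^r ⊗_K K^d` attached to a vector
`w ∈ F^r`, where `Φ : K^r → K^d` is the generic linear map with matrix entries
the indeterminates `Φ_{st}`, so that `Φ(w) s = Σ_t Φ_{st} · w t`. -/
noncomputable def rigidityVec (F : Type*) [Field F] (d r : ℕ) (w : Fin r → F) :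
    TensorProduct (GenericField F d r)
      (Fin r → GenericField F d r) (Fin d → GenericField F d r) :=
  (fun t => algebraMap (MvPolynomial (Fin d × Fin r) F) (GenericField F d r)
      (MvPolynomial.C (w t))) ⊗ₜ[GenericField F d r]
    (fun s => ∑ t, algebraMap (MvPolynomial (Fin d × Fin r) F) (GenericField F d r)
      (MvPolynomial.X (s, t) * MvPolynomial.C (w t)))

/-- A subset `A ⊆ {1,…,n}` is `d`-rigidity independent (with respect to the
representing vectors `v : Fin n → F^r`) if the vectors
`{v i ⊗ Φ(v i) : i ∈ A} ⊆ K^r ⊗_K K^d` are `K`-linearly independent, where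
`K = F(Φ)` and `Φ` is the generic `d × r` matrix. -/
def RigidityIndep (F : Type*) [Field F] (d r n : ℕ) (v : Fin n → (Fin r → F))
    (A : Set (Fin n)) : Prop :=
  LinearIndependent (GenericField F d r) (fun i : A => rigidityVec F d r (v i))

/-!
The rigidity vector of `w` is the image of the tensor square `w ⊗ w` under `id ⊗ Φ`, and a generic
`Φ` is injective as soon as `r ≤ d`; in that range independence can be tested on tensor squares.
If `f` and `g` are functionals with `f x = 0` and `g y = 0`, then `f ⊗ g` kills both `x ⊗ x` and
`y ⊗ y`, so the tensor squares of three pairwise independent vectors are always independent. On the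
other hand `w ↦ w ⊗ w` is quadratic, so its values on an `r`-dimensional space span a space of
dimension at most `r.choose 2 + r = (r + 1).choose 2`, which is `3` for `r = 2`.
-/

section TensorSquare

variable (R V : Type*) [CommRing R] [AddCommGroup V] [Module R V]

/-- The tensor square `w ↦ w ⊗ w`, as a quadratic map. -/
noncomputable def tensorSquare : QuadraticMap R V (V ⊗[R] V) :=
  LinearMap.BilinMap.toQuadraticMap (TensorProduct.mk R V V)

variable {R V}

@[simp]
theorem tensorSquare_apply (w : V) : tensorSquare R V w = w ⊗ₜ w :=
  rfl

end TensorSquare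

section QuadraticMap

variable {R V W : Type*} [CommRing R] [AddCommGroup V] [Module R V] [AddCommGroup W] [Module R W]

theorem quadraticMap_four_term_relation (Q : QuadraticMap R V W) (k : R) (x y : V) :
    (k - 1) • Q x - k • Q (x + y) + (k - k ^ 2) • Q y + Q (x + k • y) = 0 := by
  rw [QuadraticMap.map_add Q, QuadraticMap.map_add Q, QuadraticMap.map_smul,
    QuadraticMap.polar_smul_right]
  module

variable {ι κ : Type*}

/-- The coefficients of `Q` as a quadratic form in the coordinates of a basis `b`: the values
`Q (b i)` and the polar values of the pairs `b i, b j` with `i ≠ j`. -/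
def quadraticCoeffs (Q : QuadraticMap R V W) (b : Module.Basis κ R V) : Set W :=
  Set.range (Q ∘ b) ∪ (fun p => QuadraticMap.polarSym2 Q (p.map b)) '' Sym2.diagSetᶜ

theorem quadraticMap_mem_span_coeffs (Q : QuadraticMap R V W) (b : Module.Basis κ R V) (x : V) :
    Q x ∈ Submodule.span R (quadraticCoeffs Q b) := by
  classical
  rw [← QuadraticMap.sum_repr_sq_add_sum_repr_mul_polar Q b x]
  refine Submodule.add_mem _ ?_ (Submodule.sum_mem _ fun p hp => Submodule.smul_mem _ _ ?_)
  · exact Submodule.span_mono Set.subset_union_left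
      (Finsupp.range_linearCombination (R := R) (v := Q ∘ b) ▸ ⟨_, rfl⟩)
  · exact Submodule.subset_span (.inr ⟨p, (Finset.mem_filter.mp hp).2, rfl⟩)

theorem ncard_quadraticCoeffs_le [Finite κ] (Q : QuadraticMap R V W)
    (b : Module.Basis κ R V) : (quadraticCoeffs Q b).ncard ≤ (Nat.card κ + 1).choose 2 := by
  calc
    _ ≤ (Set.range (Q ∘ b)).ncard +
        ((fun p => QuadraticMap.polarSym2 Q (p.map b)) '' Sym2.diagSetᶜ).ncard :=
      Set.ncard_union_le _ _
    _ ≤ Nat.card κ + (Nat.card κ).choose 2 :=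
      Nat.add_le_add (Finite.card_range_le _)
        ((Set.ncard_image_le (Set.toFinite _)).trans_eq (Sym2.ncard_diagSet_compl κ))
    _ = (Nat.card κ + 1).choose 2 := by rw [Nat.choose_succ_succ', Nat.choose_one_right]

theorem ncard_le_choose_of_linearIndepOn_quadraticMap [Nontrivial R] [Finite κ]
    (Q : QuadraticMap R V W) (b : Module.Basis κ R V) {v : ι → V} {s : Set ι}
    (h : LinearIndepOn R (fun i => Q (v i)) s) :
    s.ncard ≤ (Nat.card κ + 1).choose 2 := by
  have hfinite : (quadraticCoeffs Q b).Finite :=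
    (Set.finite_range _).union (Set.toFinite _)
  have := hfinite.fintype
  have hcard := linearIndependent_le_span' _ h _
    (Set.range_subset_iff.mpr fun i => quadraticMap_mem_span_coeffs Q b (v i))
  calc
    s.ncard ≤ Cardinal.toNat (Fintype.card (quadraticCoeffs Q b)) :=
      Cardinal.toNat_le_toNat hcard Cardinal.natCast_lt_aleph0
    _ = (quadraticCoeffs Q b).ncard := (Cardinal.toNat_natCast _).trans Fintype.card_eq_nat_card
    _ ≤ (Nat.card κ + 1).choose 2 := ncard_quadraticCoeffs_le Q b

end QuadraticMap

theorem exists_subset_triple {α : Type*} {s : Set α} (hs : s.Finite) (hcard : s.ncard ≤ 3)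
    {i : α} (hi : i ∈ s) : ∃ j ∈ s, ∃ k ∈ s, s ⊆ {i, j, k} := by
  by_contra! h
  obtain ⟨j, hj, hji⟩ := Set.not_subset.mp (h i hi i hi)
  obtain ⟨k, hk, hkj⟩ := Set.not_subset.mp (h j hj j hj)
  simp only [Set.mem_insert_iff, Set.mem_singleton_iff, not_or] at hji hkj
  have htriple : ({i, j, k} : Set α).ncard = 3 :=
    Set.ncard_eq_three.mpr ⟨i, j, k, Ne.symm hji.1, Ne.symm hkj.1, Ne.symm hkj.2.1, rfl⟩
  have hsub : {i, j, k} ⊆ s := by simp [Set.insert_subset_iff, hi, hj, hk]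
  exact h j hj k hk (Set.eq_of_subset_of_ncard_le hsub (htriple ▸ hcard) hs).ge

section Dual

variable {K V ι : Type*} [Field K] [AddCommGroup V] [Module K V] {v : ι → V}

theorem exists_dual_eq_one_of_linearIndepOn_pair {i j : ι} (h : LinearIndepOn K v {i, j}) :
    ∃ f : Module.Dual K V, f (v i) = 1 ∧ (j ≠ i → f (v j) = 0) := by
  obtain ⟨f, hfi, hf⟩ := Submodule.exists_le_ker_of_notMem (h.notMem_span (Set.mem_insert i {j}))
  refine ⟨(f (v i))⁻¹ • f, inv_mul_cancel₀ hfi, fun hji => ?_⟩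
  have hfj : f (v j) = 0 := hf (Submodule.subset_span ⟨j, by simp [hji], rfl⟩)
  simp [hfj]

theorem linearIndepOn_tensorSquare_of_ncard_le_three {s : Set ι} (hs : s.Finite)
    (hcard : s.ncard ≤ 3) (hv : ∀ i ∈ s, ∀ j ∈ s, LinearIndepOn K v {i, j}) :
    LinearIndepOn K (fun i => tensorSquare K V (v i)) s := by
  have exists_dual (i : s) : ∃ F : Module.Dual K (V ⊗[K] V), F (tensorSquare K V (v i)) = 1 ∧
      ∀ l ∈ s, l ≠ i → F (tensorSquare K V (v l)) = 0 := by
    obtain ⟨j, hj, k, hk, hsub⟩ := exists_subset_triple hs hcard i.2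
    obtain ⟨f, hfi, hfj⟩ := exists_dual_eq_one_of_linearIndepOn_pair (hv i i.2 j hj)
    obtain ⟨g, hgi, hgk⟩ := exists_dual_eq_one_of_linearIndepOn_pair (hv i i.2 k hk)
    refine ⟨TensorProduct.dualDistrib K V V (f ⊗ₜ g), by simp [hfi, hgi], fun l hl hli => ?_⟩
    rcases hsub hl with rfl | rfl | rfl
    · exact absurd rfl hli
    · simp [hfj hli]
    · simp [hgk hli]
  choose F hF_self hF_ne using exists_dual
  exact .of_pairwise_dual_eq_zero_one _ F
    (fun i j hij => hF_ne i j j.2 (Subtype.coe_ne_coe.mpr hij.symm)) hF_self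

end Dual

section GenericMatrix

variable (F : Type*) [Field F] (d r : ℕ)

/-- The generic `d × r` matrix `Φ` over `K = F(Φ)`. -/
noncomputable def genericMatrix : Matrix (Fin d) (Fin r) (GenericField F d r) :=
  (Matrix.mvPolynomialX (Fin d) (Fin r) F).map (algebraMap _ _)

theorem det_genericMatrix_submatrix_ne_zero {e : Fin r → Fin d} (he : Function.Injective e) :
    ((genericMatrix F d r).submatrix e id).det ≠ 0 := by
  have hminor : (genericMatrix F d r).submatrix e id =
      ((algebraMap _ (GenericField F d r)).comp (MvPolynomial.rename (R := F)
        (Prod.map e id)).toRingHom).mapMatrix (Matrix.mvPolynomialX (Fin r) (Fin r) F) := by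
    ext s t
    simp [genericMatrix]
  rw [hminor, ← RingHom.map_det]
  have hinj := (IsFractionRing.injective (MvPolynomial (Fin d × Fin r) F)
    (GenericField F d r)).comp
      (MvPolynomial.rename_injective (R := F) _ (he.prodMap Function.injective_id))
  exact (map_ne_zero_iff _ hinj).mpr (Matrix.det_mvPolynomialX_ne_zero (Fin r) F)

variable {d r}

theorem genericMatrix_mulVec_injective (hrd : r ≤ d) :
    Function.Injective (genericMatrix F d r).mulVec := by
  intro x y hxy
  refine Matrix.mulVec_injective_of_det_ne_zero
    (det_genericMatrix_submatrix_ne_zero F d r (Fin.castLE_injective hrd)) ?_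
  ext s
  exact congrFun hxy (Fin.castLE hrd s)

end GenericMatrix

section Rigidity

variable {F : Type*} [Field F] {d r n : ℕ} {v : Fin n → Fin r → F} {A : Set (Fin n)}

theorem genericField_algebraMap_C (c : F) :
    algebraMap (MvPolynomial (Fin d × Fin r) F) (GenericField F d r) (MvPolynomial.C c) =
      algebraMap F (GenericField F d r) c :=
  (IsScalarTower.algebraMap_apply F (MvPolynomial (Fin d × Fin r) F) _ c).symm

theorem rigidityVec_eq_lTensor (w : Fin r → F) :
    rigidityVec F d r w = (genericMatrix F d r).mulVecLin.lTensor _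
      (tensorSquare _ _ (algebraMap F (GenericField F d r) ∘ w)) := by
  simp only [rigidityVec, tensorSquare_apply, LinearMap.lTensor_tmul, map_mul,
    genericField_algebraMap_C]
  rfl

theorem RigidityIndep.linearIndepOn_tensorSquare (h : RigidityIndep F d r n v A) :
    LinearIndepOn (GenericField F d r)
      (fun i => tensorSquare (GenericField F d r) _ (algebraMap F (GenericField F d r) ∘ v i))
      A := by
  simp only [RigidityIndep, rigidityVec_eq_lTensor] at h
  exact h.of_comp _

theorem RigidityIndep.ncard_le_choose (h : RigidityIndep F d r n v A) :
    A.ncard ≤ (r + 1).choose 2 := by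
  simpa using ncard_le_choose_of_linearIndepOn_quadraticMap _
    (Pi.basisFun (GenericField F d r) (Fin r)) h.linearIndepOn_tensorSquare

theorem rigidityIndep_of_ncard_le_three (hrd : r ≤ d)
    (hv : ∀ i ∈ A, ∀ j ∈ A, LinearIndepOn F v {i, j}) (hA : A.ncard ≤ 3) :
    RigidityIndep F d r n v A := by
  have hsquare := linearIndepOn_tensorSquare_of_ncard_le_three
    (v := fun i => algebraMap F (GenericField F d r) ∘ v i) A.toFinite hA
    fun i hi j hj => linearIndependent_algebraMap_comp_iff.mpr (hv i hi j hj)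
  have hΦ := Module.Flat.lTensor_preserves_injective_linearMap
    (M := Fin r → GenericField F d r) (genericMatrix F d r).mulVecLin
    (genericMatrix_mulVec_injective F hrd)
  simp only [RigidityIndep, rigidityVec_eq_lTensor]
  exact hsquare.map' _ (LinearMap.ker_eq_bot.mpr hΦ)

theorem rigidityIndep_iff_ncard_le_three (hd : 2 ≤ d) {v : Fin n → Fin 2 → F}
    (hv : ∀ i j, LinearIndepOn F v {i, j}) : RigidityIndep F d 2 n v A ↔ A.ncard ≤ 3 :=
  ⟨fun h => h.ncard_le_choose, rigidityIndep_of_ncard_le_three hd fun i _ j _ => hv i j⟩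

theorem rigidityVec_four_term_relation (k : F) (x y : Fin r → F) :
    (algebraMap F (GenericField F d r) k - 1) • rigidityVec F d r x -
      algebraMap F (GenericField F d r) k • rigidityVec F d r (x + y) +
      (algebraMap F (GenericField F d r) k - algebraMap F (GenericField F d r) k ^ 2) •
        rigidityVec F d r y +
      rigidityVec F d r (x + k • y) = 0 := by
  have hadd : algebraMap F (GenericField F d r) ∘ (x + y) =
      algebraMap F (GenericField F d r) ∘ x + algebraMap F (GenericField F d r) ∘ y := by
    ext; simp
  have hadd_smul : algebraMap F (GenericField F d r) ∘ (x + k • y) =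
      algebraMap F (GenericField F d r) ∘ x +
        algebraMap F (GenericField F d r) k • (algebraMap F (GenericField F d r) ∘ y) := by
    ext; simp [Algebra.smul_def]
  simp only [rigidityVec_eq_lTensor, hadd, hadd_smul, ← LinearMap.compQuadraticMap_apply]
  exact quadraticMap_four_term_relation _ _ _ _

end Rigidity

theorem linearIndepOn_pair_of_cross_ne_zero {R ι : Type*} [CommRing R] [NoZeroDivisors R]
    {v : ι → Fin 2 → R} {i j : ι} (hij : i ≠ j) (hcross : v i 0 * v j 1 - v i 1 * v j 0 ≠ 0) :
    LinearIndepOn R v {i, j} := by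
  rw [LinearIndepOn.pair_iff _ hij]
  intro a b hab
  have h0 : a * v i 0 + b * v j 0 = 0 := congrFun hab 0
  have h1 : a * v i 1 + b * v j 1 = 0 := congrFun hab 1
  constructor
  · exact (mul_eq_zero_iff_right hcross).mp (by linear_combination v j 1 * h0 - v j 0 * h1)
  · exact (mul_eq_zero_iff_right hcross).mp (by linear_combination v i 0 * h1 - v i 1 * h0)

theorem linearIndepOn_pair_U24 {F : Type*} [Field F] {μ : F} (hμ0 : μ ≠ 0) (hμ1 : μ ≠ 1)
    (i j : Fin 4) : LinearIndepOn F ![![1, 0], ![1, 1], ![0, 1], ![1, μ]] {i, j} := by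
  by_cases hij : i = j
  · subst hij
    rw [Set.pair_eq_singleton, linearIndepOn_singleton_iff]
    fin_cases i <;> simp
  · apply linearIndepOn_pair_of_cross_ne_zero hij
    fin_cases i <;> fin_cases j <;> simp_all [sub_ne_zero, hμ1.symm]

/-- **Example (`R^d(U_{2,4}) = U_{3,4}` for all `d ≥ 2`).**
Let `F` be a field with more than two elements, `μ ∈ F ∖ {0,1}`, and represent
`U_{2,4}` by `v 1 = e₁, v 2 = e₁+e₂, v 3 = e₂, v 4 = e₁+μe₂ ∈ F²`.  For `d ≥ 2`
put `w i = v i ⊗ Φ(v i) ∈ K² ⊗_K K^d` with `Φ` the generic `d × 2` matrix over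
`K = F(Φ)`.  Then `(μ-1)w₁ - μw₂ + (μ-μ²)w₃ + w₄ = 0`, every three of the
`w i` are `K`-linearly independent, and consequently the `d`-rigidity matroid
of `U_{2,4}` is the uniform matroid `U_{3,4}`. -/
theorem rigidity_U24 (F : Type*) [Field F]
    (hF : ∃ x y z : F, x ≠ y ∧ x ≠ z ∧ y ≠ z)
    (μ : F) (hμ0 : μ ≠ 0) (hμ1 : μ ≠ 1) (d : ℕ) (hd : 2 ≤ d) :
    let v : Fin 4 → Fin 2 → F := ![![1, 0], ![1, 1], ![0, 1], ![1, μ]]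
    let K := GenericField F d 2
    let kμ : K := algebraMap (MvPolynomial (Fin d × Fin 2) F) K (MvPolynomial.C μ)
    let w : Fin 4 → TensorProduct K (Fin 2 → K) (Fin d → K) :=
      fun i => rigidityVec F d 2 (v i)
    ((kμ - 1) • w 0 - kμ • w 1 + (kμ - kμ ^ 2) • w 2 + w 3 = 0) ∧
      (∀ i : Fin 4, LinearIndependent K (fun j : {j : Fin 4 // j ≠ i} => w j)) ∧
      (∀ A : Set (Fin 4), RigidityIndep F d 2 4 v A ↔ A.ncard ≤ 3) := by
  intro v K kμ w
  have hindep {A : Set (Fin 4)} : RigidityIndep F d 2 4 v A ↔ A.ncard ≤ 3 :=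
    rigidityIndep_iff_ncard_le_three hd (linearIndepOn_pair_U24 hμ0 hμ1)
  refine ⟨?_, fun i => hindep.mpr ?_, fun A => hindep⟩
  · have hv1 : ![1, 0] + ![0, 1] = v 1 := by simp [v]
    have hv3 : ![1, 0] + μ • ![0, 1] = v 3 := by simp [v]
    have hrel := rigidityVec_four_term_relation (d := d) μ ![1, 0] ![0, 1]
    rwa [hv1, hv3, ← genericField_algebraMap_C] at hrel
  · change ({i}ᶜ : Set (Fin 4)).ncard ≤ 3
    exact (Set.ncard_compl {i}).trans (by simp) |>.le
end
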